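/- arXiv:0801.0496 — 2 statements merged into one kernel-verified Lean document; each statement's English description precedes it below -/
import Mathlib

section
/- Let L > 0, a > 0, and let γ, θ ∈ ℝ satisfy one of: (i) 1/4 < γ < 3/4 and 3/8 − γ/2 ≤ θ < 3/4 − γ; (ii) 0 ≤ γ ≤ 1/4 and 5/8 − γ ≤ θ < 3/4 − γ; (iii) γ < 0 and 1/2 − γ ≤ θ < 3/4 − γ. Set λ_n = (2πn/L)² for n ≠ 0. Then there is a constant c (depending on L, γ, θ, a) such that for every complex sequence (v_n)_{n∈ℤ} with v_0 = 0 and ∑_{n≠0} λ_n^{2θ} |v_n|² < ∞, one has (∑_{n≠0} λ_n^{−2γ} | (π i n/L) ∑_{k∈ℤ} v_k v_{n−k} − a v_n |²)^{1/2} ≤ c (1 + ∑_{n≠0} λ_n^{2θ} |v_n|²). -/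
/-- Eigenvalue of `A = -d²/dξ²` on the `n`-th Fourier mode of a zero-mean
`L`-periodic function. -/
noncomputable def ksEigen (L : ℝ) (n : ℤ) : ℝ := (2 * Real.pi * n / L) ^ 2

/-- `n`-th Fourier coefficient of the Kuramoto–Sivashinsky nonlinearity
`B(v,v) = v v' = ½(v²)'`: `c_n = (π i n / L) ∑_k v_k v_{n-k}`. -/
noncomputable def ksB (L : ℝ) (v : ℤ → ℂ) (n : ℤ) : ℂ :=
  (Real.pi : ℂ) * Complex.I * (n : ℂ) / (L : ℂ) * ∑' k : ℤ, v k * v (n - k)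

open scoped ENNReal

/-- Cauchy–Schwarz for sums in `ℝ≥0∞`. -/
theorem ENNReal.tsum_mul_sq_le {ι : Type*} (a b : ι → ℝ≥0∞) :
    (∑' i, a i * b i) ^ 2 ≤ (∑' i, a i ^ 2) * ∑' i, b i ^ 2 := by
  let _ : MeasurableSpace ι := ⊤
  have h := ENNReal.lintegral_mul_le_Lp_mul_Lq (MeasureTheory.Measure.count (α := ι))
    Real.HolderConjugate.two_two (f := a) (g := b)
    measurable_from_top.aemeasurable measurable_from_top.aemeasurable
  simp only [MeasureTheory.lintegral_count, Pi.mul_apply, ENNReal.rpow_two] at h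
  calc (∑' i, a i * b i) ^ 2
      ≤ ((∑' i, a i ^ 2) ^ (1 / 2 : ℝ) * (∑' i, b i ^ 2) ^ (1 / 2 : ℝ)) ^ 2 := by gcongr
    _ = (∑' i, a i ^ 2) * ∑' i, b i ^ 2 := by
      rw [mul_pow, ← ENNReal.rpow_two, ← ENNReal.rpow_two, ← ENNReal.rpow_mul, ← ENNReal.rpow_mul]
      norm_num

/-- The bilinear convolution form with kernel `K`, tested against `g`. -/
theorem tsum_mul_kernel_conv_sq_le {K : ℤ → ℤ → ℝ≥0∞} {C : ℝ≥0∞}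
    (hK : ∀ m, ∑' k, K k m ^ 2 ≤ C) (f g : ℤ → ℝ≥0∞) :
    (∑' n, g n * ∑' k, K k (n - k) * (f k * f (n - k))) ^ 2 ≤
      C * (∑' k, f k ^ 2) ^ 2 * ∑' n, g n ^ 2 := by
  have hswap : ∑' n, g n * ∑' k, K k (n - k) * (f k * f (n - k)) =
      ∑' m, f m * ∑' k, K k m * (f k * g (k + m)) := by
    have h1 : ∀ n, g n * ∑' k, K k (n - k) * (f k * f (n - k)) =
        ∑' m, g n * (K (n - m) m * (f (n - m) * f m)) := fun n => by
      rw [← ENNReal.tsum_mul_left, ← (Equiv.subLeft n).tsum_eq]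
      simp
    simp_rw [h1]
    rw [ENNReal.tsum_comm]
    refine tsum_congr fun m => ?_
    rw [← ENNReal.tsum_mul_left, ← (Equiv.addRight m).tsum_eq]
    refine tsum_congr fun k => ?_
    simp only [Equiv.coe_addRight, add_sub_cancel_right]
    ring
  have hinner : ∀ m, (∑' k, K k m * (f k * g (k + m))) ^ 2 ≤
      C * ∑' k, f k ^ 2 * g (k + m) ^ 2 := fun m => by
    refine (ENNReal.tsum_mul_sq_le _ _).trans ?_
    simp_rw [mul_pow]
    gcongr
    exact hK m
  have hsum : ∑' m, ∑' k, f k ^ 2 * g (k + m) ^ 2 = (∑' k, f k ^ 2) * ∑' n, g n ^ 2 := by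
    rw [ENNReal.tsum_comm, ← ENNReal.tsum_mul_right]
    refine tsum_congr fun k => ?_
    rw [ENNReal.tsum_mul_left, ← (Equiv.addLeft k).tsum_eq (fun n => g n ^ 2)]
    simp
  rw [hswap]
  calc _ ≤ (∑' m, f m ^ 2) * ∑' m, (∑' k, K k m * (f k * g (k + m))) ^ 2 :=
        ENNReal.tsum_mul_sq_le _ _
    _ ≤ (∑' m, f m ^ 2) * ∑' m, C * ∑' k, f k ^ 2 * g (k + m) ^ 2 := by
        gcongr with m
        exact hinner m
    _ = _ := by rw [ENNReal.tsum_mul_left, hsum]; ring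

/-- The bilinear convolution with kernel `K` is bounded on `ℓ²` when the columns of `K` are
uniformly square summable. -/
theorem tsum_kernel_conv_sq_le {K : ℤ → ℤ → ℝ≥0∞} {C : ℝ≥0∞} (hC : C ≠ ∞)
    (hK : ∀ m, ∑' k, K k m ^ 2 ≤ C) (f : ℤ → ℝ≥0∞) (hf : ∑' k, f k ^ 2 ≠ ∞) :
    ∑' n, (∑' k, K k (n - k) * (f k * f (n - k))) ^ 2 ≤ C * (∑' k, f k ^ 2) ^ 2 := by
  set w : ℤ → ℝ≥0∞ := fun n => ∑' k, K k (n - k) * (f k * f (n - k))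
  have hdual : ∀ g : ℤ → ℝ≥0∞, (∑' n, g n * w n) ^ 2 ≤
      C * (∑' k, f k ^ 2) ^ 2 * ∑' n, g n ^ 2 := tsum_mul_kernel_conv_sq_le hK f
  have hw_top : ∀ n, w n ≠ ∞ := fun n hn => by
    have h := hdual (Pi.single n 1)
    have e : ∑' i, (Pi.single n 1 : ℤ → ℝ≥0∞) i ^ 2 = 1 := by
      rw [tsum_eq_single n (by intro b hb; simp [hb])]
      simp
    rw [e, tsum_eq_single n (by intro b hb; simp [hb]), Pi.single_eq_same, hn] at h
    have hlt : C * (∑' k, f k ^ 2) ^ 2 * 1 < ∞ := by finiteness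
    exact hlt.ne (top_le_iff.1 (by simpa using h))
  refine ENNReal.summable.tsum_le_of_sum_le fun F => ?_
  have h := hdual (fun n => if n ∈ F then w n else 0)
  have e1 : ∑' n, (if n ∈ F then w n else 0) * w n = ∑ n ∈ F, w n ^ 2 := by
    rw [tsum_eq_sum (s := F) (by intro b hb; simp [hb])]
    exact Finset.sum_congr rfl fun n hn => by simp [hn, sq]
  have e2 : ∑' n, (if n ∈ F then w n else 0) ^ 2 = ∑ n ∈ F, w n ^ 2 := by
    rw [tsum_eq_sum (s := F) (by intro b hb; simp [hb])]
    exact Finset.sum_congr rfl fun n hn => by simp [hn]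
  rw [e1, e2, sq (∑ n ∈ F, w n ^ 2)] at h
  by_cases h0 : ∑ n ∈ F, w n ^ 2 = 0
  · exact h0.le.trans zero_le
  · have ht : ∑ n ∈ F, w n ^ 2 ≠ ∞ :=
      ENNReal.sum_ne_top.2 fun n _ => ENNReal.pow_ne_top (hw_top n)
    exact (ENNReal.mul_le_mul_iff_left h0 ht).1 h

theorem sum_Icc_rpow_sub_one_le {q : ℝ} (hq : 0 < q) (hq1 : q ≤ 1) (N : ℕ) :
    ∑ j ∈ Finset.Icc 1 N, (j : ℝ) ^ (q - 1) ≤ (N : ℝ) ^ q / q := by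
  induction N with
  | zero => simp [hq.ne']
  | succ N ih =>
    rw [Finset.sum_Icc_succ_top (by omega)]
    have hx : (0 : ℝ) < (N + 1 : ℕ) := by positivity
    set x : ℝ := ((N + 1 : ℕ) : ℝ) with hxdef
    have hN : (N : ℝ) = x * (1 + -(1 / x)) := by
      field_simp
      simp [hxdef]
    have hx1 : 1 ≤ x := by simp [hxdef]
    have h1 : 1 / x ≤ 1 := by rw [div_le_one hx]; exact hx1
    have hb : (1 + -(1 / x)) ^ q ≤ 1 + q * -(1 / x) :=
      rpow_one_add_le_one_add_mul_self (by linarith) hq.le hq1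
    have h2 : (N : ℝ) ^ q ≤ x ^ q - q * x ^ (q - 1) := by
      rw [hN, Real.mul_rpow hx.le (by linarith), Real.rpow_sub_one hx.ne']
      calc _ ≤ x ^ q * (1 + q * -(1 / x)) := by gcongr
        _ = _ := by ring
    calc _ ≤ (N : ℝ) ^ q / q + x ^ (q - 1) := by gcongr
      _ ≤ (x ^ q - q * x ^ (q - 1)) / q + x ^ (q - 1) := by gcongr
      _ = _ := by field_simp; ring

theorem sum_Icc_abs_rpow_sub_one_le {q : ℝ} (hq : 0 < q) (hq1 : q < 1) (N : ℕ) :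
    ∑ k ∈ Finset.Icc (-(N : ℤ)) N, |(k : ℝ)| ^ (q - 1) ≤ 2 / q * (N : ℝ) ^ q := by
  have h : ∑ k ∈ Finset.Icc (-(N : ℤ)) N, |(k : ℝ)| ^ (q - 1) =
      2 * ∑ j ∈ Finset.Icc 1 N, (j : ℝ) ^ (q - 1) := by
    induction N with
    | zero => simp [Real.zero_rpow (by linarith : q - 1 ≠ 0)]
    | succ N ih =>
      have hset : Finset.Icc (-((N + 1 : ℕ) : ℤ)) ((N + 1 : ℕ) : ℤ) =
          insert (-((N : ℤ) + 1)) (insert ((N : ℤ) + 1) (Finset.Icc (-(N : ℤ)) N)) := by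
        ext k
        simp only [Finset.mem_Icc, Finset.mem_insert]
        omega
      have hpos : |(N : ℝ) + 1| = (N : ℝ) + 1 := abs_of_nonneg (by positivity)
      rw [hset, Finset.sum_insert (by simp; omega), Finset.sum_insert (by simp), ih,
        Finset.sum_Icc_succ_top (by omega)]
      push_cast
      rw [abs_neg, hpos]
      ring
  rw [h]
  have := sum_Icc_rpow_sub_one_le hq hq1.le N
  calc _ ≤ 2 * ((N : ℝ) ^ q / q) := by gcongr
    _ = _ := by ring

/-- The kernel bound at the critical index, below the algebra threshold. -/
theorem exists_sum_kernel_le_of_lt_half {s : ℝ} (hs : 0 < s) (hs2 : s < 1 / 2) :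
    ∃ C : ℝ, ∀ m : ℤ, ∑ k ∈ Finset.Icc (-(m.natAbs : ℤ)) m.natAbs,
      |((k + m : ℤ) : ℝ)| ^ (4 * s - 1) * |(k : ℝ)| ^ (-(2 * s)) * |(m : ℝ)| ^ (-(2 * s)) ≤ C := by
  have habs : ∀ m : ℤ, |(m : ℝ)| = (m.natAbs : ℝ) := fun m => by
    rw [Nat.cast_natAbs, Int.cast_abs]
  rcases le_or_gt (1 / 4) s with h4 | h4
  · refine ⟨2 ^ (4 * s - 1) * (2 / (1 - 2 * s)), fun m => ?_⟩
    rcases eq_or_ne m 0 with rfl | hm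
    · have : 0 < 1 - 2 * s := by linarith
      rw [Finset.sum_eq_zero]
      · positivity
      · intro k _
        simp [Real.zero_rpow (by linarith : -(2 * s) ≠ 0)]
    have hN : 0 < |(m : ℝ)| := by positivity
    have hsum := sum_Icc_abs_rpow_sub_one_le (q := 1 - 2 * s) (by linarith) (by linarith) m.natAbs
    rw [← habs] at hsum
    calc _ ≤ ∑ k ∈ Finset.Icc (-(m.natAbs : ℤ)) m.natAbs,
          (2 * |(m : ℝ)|) ^ (4 * s - 1) * |(k : ℝ)| ^ (1 - 2 * s - 1) * |(m : ℝ)| ^ (-(2 * s)) := by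
          refine Finset.sum_le_sum fun k hk => ?_
          rw [show (1 - 2 * s - 1 : ℝ) = -(2 * s) by ring]
          have hkm : |((k + m : ℤ) : ℝ)| ≤ 2 * |(m : ℝ)| := by
            rw [Finset.mem_Icc] at hk
            exact_mod_cast (by simp only [Int.abs_eq_natAbs]; omega : |k + m| ≤ 2 * |m|)
          gcongr
          linarith
      _ = (2 * |(m : ℝ)|) ^ (4 * s - 1) * |(m : ℝ)| ^ (-(2 * s)) *
          ∑ k ∈ Finset.Icc (-(m.natAbs : ℤ)) m.natAbs, |(k : ℝ)| ^ (1 - 2 * s - 1) := by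
          rw [Finset.mul_sum]
          exact Finset.sum_congr rfl fun k _ => by ring
      _ ≤ (2 * |(m : ℝ)|) ^ (4 * s - 1) * |(m : ℝ)| ^ (-(2 * s)) *
          (2 / (1 - 2 * s) * |(m : ℝ)| ^ (1 - 2 * s)) := by gcongr
      _ = 2 ^ (4 * s - 1) * (2 / (1 - 2 * s)) *
          (|(m : ℝ)| ^ (4 * s - 1) * |(m : ℝ)| ^ (-(2 * s)) * |(m : ℝ)| ^ (1 - 2 * s)) := by
          rw [Real.mul_rpow (by norm_num) hN.le]; ring
      _ = _ := by
          rw [← Real.rpow_add hN, ← Real.rpow_add hN]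
          ring_nf
          simp
  · refine ⟨2 / (2 * s) * (2 ^ (2 * s) + 1), fun m => ?_⟩
    rcases eq_or_ne m 0 with rfl | hm
    · rw [Finset.sum_eq_zero]
      · positivity
      · intro k _
        simp [Real.zero_rpow (by linarith : -(2 * s) ≠ 0)]
    have hN : 0 < |(m : ℝ)| := by positivity
    have hsum := sum_Icc_abs_rpow_sub_one_le (q := 2 * s) (by linarith) (by linarith) m.natAbs
    rw [← habs] at hsum
    have hsum2 := sum_Icc_abs_rpow_sub_one_le (q := 2 * s) (by linarith) (by linarith)
      (2 * m.natAbs)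
    have hshift : ∑ k ∈ Finset.Icc (-(m.natAbs : ℤ)) m.natAbs,
        |((k + m : ℤ) : ℝ)| ^ (2 * s - 1) ≤ 2 / (2 * s) * (2 * |(m : ℝ)|) ^ (2 * s) := by
      rw [habs]
      rw [Nat.cast_mul 2 m.natAbs (α := ℝ), Nat.cast_two] at hsum2
      refine le_trans ?_ hsum2
      rw [← Finset.sum_image (s := Finset.Icc (-(m.natAbs : ℤ)) m.natAbs) (g := fun k => k + m)
        (f := fun j : ℤ => |(j : ℝ)| ^ (2 * s - 1)) (by intro a _ b _ h; simpa using h)]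
      refine Finset.sum_le_sum_of_subset_of_nonneg ?_ fun _ _ _ => by positivity
      intro j hj
      simp only [Finset.mem_image, Finset.mem_Icc] at hj ⊢
      obtain ⟨k, hk, rfl⟩ := hj
      omega
    have hpt : ∀ x y : ℝ, 0 ≤ x → 0 ≤ y →
        x ^ (4 * s - 1) * y ^ (-(2 * s)) ≤ x ^ (2 * s - 1) + y ^ (2 * s - 1) := by
      intro x y hx hy
      rcases hx.eq_or_lt with rfl | hx
      · rw [Real.zero_rpow (by linarith : 4 * s - 1 ≠ 0), zero_mul]
        positivity
      rcases hy.eq_or_lt with rfl | hy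
      · rw [Real.zero_rpow (by linarith : -(2 * s) ≠ 0), mul_zero]
        positivity
      have e : 2 * s - 1 = (4 * s - 1) + -(2 * s) := by ring
      rcases le_total x y with h | h
      · refine le_trans ?_ (le_add_of_nonneg_right (by positivity))
        rw [e, Real.rpow_add hx]
        exact mul_le_mul_of_nonneg_left
          (Real.rpow_le_rpow_of_nonpos hx h (by linarith)) (by positivity)
      · refine le_trans ?_ (le_add_of_nonneg_left (by positivity))
        rw [e, Real.rpow_add hy]
        exact mul_le_mul_of_nonneg_right
          (Real.rpow_le_rpow_of_nonpos hy h (by linarith)) (by positivity)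
    rw [← Finset.sum_mul]
    calc _ ≤ (∑ k ∈ Finset.Icc (-(m.natAbs : ℤ)) m.natAbs,
          (|((k + m : ℤ) : ℝ)| ^ (2 * s - 1) + |(k : ℝ)| ^ (2 * s - 1))) *
            |(m : ℝ)| ^ (-(2 * s)) := by
          gcongr with k hk
          exact hpt _ _ (abs_nonneg _) (abs_nonneg _)
      _ ≤ (2 / (2 * s) * (2 * |(m : ℝ)|) ^ (2 * s) + 2 / (2 * s) * |(m : ℝ)| ^ (2 * s)) *
            |(m : ℝ)| ^ (-(2 * s)) := by
          rw [Finset.sum_add_distrib]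
          gcongr
      _ = 2 / (2 * s) * (2 ^ (2 * s) + 1) * (|(m : ℝ)| ^ (2 * s) * |(m : ℝ)| ^ (-(2 * s))) := by
          rw [Real.mul_rpow (by norm_num) hN.le]; ring
      _ = _ := by
          rw [← Real.rpow_add hN]
          simp

/-- The kernel bound above the algebra threshold. -/
theorem exists_sum_kernel_le_of_half_lt {s σ : ℝ} (hs : 1 / 2 < s) (hσ : 0 ≤ σ) (hσs : σ ≤ s) :
    ∃ C : ℝ, ∀ m : ℤ, ∑ k ∈ Finset.Icc (-(m.natAbs : ℤ)) m.natAbs,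
      |((k + m : ℤ) : ℝ)| ^ (2 * σ) * |(k : ℝ)| ^ (-(2 * s)) * |(m : ℝ)| ^ (-(2 * s)) ≤ C := by
  have hsum : Summable fun k : ℤ => |(k : ℝ)| ^ (-(2 * s)) :=
    Real.summable_abs_int_rpow (by linarith)
  refine ⟨2 ^ (2 * σ) * ∑' k : ℤ, |(k : ℝ)| ^ (-(2 * s)), fun m => ?_⟩
  have hfin : ∑ k ∈ Finset.Icc (-(m.natAbs : ℤ)) m.natAbs, |(k : ℝ)| ^ (-(2 * s)) ≤
      ∑' k : ℤ, |(k : ℝ)| ^ (-(2 * s)) := hsum.sum_le_tsum _ fun _ _ => by positivity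
  refine le_trans ?_ (mul_le_mul_of_nonneg_left hfin (by positivity))
  rw [Finset.mul_sum]
  refine Finset.sum_le_sum fun k hk => ?_
  rcases eq_or_ne m 0 with rfl | hm
  · simp only [Int.cast_zero, abs_zero, Real.zero_rpow (by linarith : -(2 * s) ≠ 0), mul_zero]
    positivity
  have hN : 1 ≤ |(m : ℝ)| := by exact_mod_cast Int.one_le_abs hm
  have hkm : |((k + m : ℤ) : ℝ)| ≤ 2 * |(m : ℝ)| := by
    rw [Finset.mem_Icc] at hk
    exact_mod_cast (by simp only [Int.abs_eq_natAbs]; omega : |k + m| ≤ 2 * |m|)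
  calc _ ≤ (2 * |(m : ℝ)|) ^ (2 * σ) * |(k : ℝ)| ^ (-(2 * s)) * |(m : ℝ)| ^ (-(2 * s)) := by
        gcongr
    _ = 2 ^ (2 * σ) * |(k : ℝ)| ^ (-(2 * s)) * (|(m : ℝ)| ^ (2 * σ) * |(m : ℝ)| ^ (-(2 * s))) := by
        rw [Real.mul_rpow (by norm_num) (abs_nonneg _)]; ring
    _ ≤ 2 ^ (2 * σ) * |(k : ℝ)| ^ (-(2 * s)) * 1 := by
        rw [← Real.rpow_add (by linarith)]
        gcongr
        exact Real.rpow_le_one_of_one_le_of_nonpos hN (by linarith)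
    _ = _ := mul_one _

/-- Sobolev multiplication estimate on the Fourier side, from a kernel bound. -/
theorem exists_tsum_conv_sq_le {s σ : ℝ}
    (hK : ∃ C : ℝ, ∀ m : ℤ, ∑ k ∈ Finset.Icc (-(m.natAbs : ℤ)) m.natAbs,
      |((k + m : ℤ) : ℝ)| ^ (2 * σ) * |(k : ℝ)| ^ (-(2 * s)) * |(m : ℝ)| ^ (-(2 * s)) ≤ C) :
    ∃ C : ℝ, 0 ≤ C ∧ ∀ v : ℤ → ℂ, v 0 = 0 →
      Summable (fun n : ℤ => |(n : ℝ)| ^ (2 * s) * ‖v n‖ ^ 2) →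
      ∀ F : Finset ℤ, ∑ n ∈ F, |(n : ℝ)| ^ (2 * σ) * ‖∑' k : ℤ, v k * v (n - k)‖ ^ 2 ≤
        C * (∑' n : ℤ, |(n : ℝ)| ^ (2 * s) * ‖v n‖ ^ 2) ^ 2 := by
  obtain ⟨C, hC⟩ := hK
  have hsq : ∀ x p : ℝ, 0 ≤ x → x ^ (2 * p) = (x ^ p) ^ 2 := fun x p hx => by
    rw [mul_comm, Real.rpow_mul hx, Real.rpow_two]
  have hC0 : 0 ≤ C := le_trans (Finset.sum_nonneg fun _ _ => by positivity) (hC 0)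
  refine ⟨4 * C, by positivity, fun v hv0 hv F => ?_⟩
  let κ : ℤ → ℤ → ℝ := fun k m => if |k| ≤ |m| then
    |((k + m : ℤ) : ℝ)| ^ σ * |(k : ℝ)| ^ (-s) * |(m : ℝ)| ^ (-s) else 0
  have hκ0 : ∀ k m, 0 ≤ κ k m := fun k m => by
    simp only [κ]; split_ifs <;> positivity
  have hKbound : ∀ m, ∑' k, ENNReal.ofReal (κ k m) ^ 2 ≤ ENNReal.ofReal C := fun m => by
    rw [tsum_eq_sum (s := Finset.Icc (-(m.natAbs : ℤ)) m.natAbs)]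
    · simp_rw [← ENNReal.ofReal_pow (hκ0 _ _)]
      rw [← ENNReal.ofReal_sum_of_nonneg fun _ _ => by positivity]
      refine ENNReal.ofReal_le_ofReal (le_trans (le_of_eq ?_) (hC m))
      refine Finset.sum_congr rfl fun k hk => ?_
      rw [Finset.mem_Icc] at hk
      simp only [κ]
      rw [if_pos (by simp only [Int.abs_eq_natAbs]; omega), mul_pow, mul_pow,
        ← hsq _ _ (abs_nonneg _), ← hsq _ _ (abs_nonneg _), ← hsq _ _ (abs_nonneg _)]
      simp only [mul_neg]
    · intro k hk
      rw [Finset.mem_Icc] at hk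
      simp only [κ]
      rw [if_neg (by simp only [Int.abs_eq_natAbs]; omega)]
      simp
  let f : ℤ → ℝ := fun n => |(n : ℝ)| ^ s * ‖v n‖
  have hf0 : ∀ n, 0 ≤ f n := fun n => by positivity
  have hfsum : ∑' n, ENNReal.ofReal (f n) ^ 2 =
      ENNReal.ofReal (∑' n : ℤ, |(n : ℝ)| ^ (2 * s) * ‖v n‖ ^ 2) := by
    rw [ENNReal.ofReal_tsum_of_nonneg (fun _ => by positivity) hv]
    refine tsum_congr fun n => ?_
    rw [← ENNReal.ofReal_pow (hf0 n), mul_pow, hsq _ _ (abs_nonneg _)]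
  have hmain := tsum_kernel_conv_sq_le (K := fun k m => ENNReal.ofReal (κ k m))
    ENNReal.ofReal_ne_top hKbound (fun n => ENNReal.ofReal (f n)) (by rw [hfsum]; simp)
  rw [hfsum] at hmain
  have hterm : ∀ n k : ℤ, |(n : ℝ)| ^ σ * ‖v k * v (n - k)‖ ≤
      κ k (n - k) * (f k * f (n - k)) + κ (n - k) k * (f k * f (n - k)) := by
    intro n k
    rcases eq_or_ne k 0 with rfl | hk
    · simp only [hv0, zero_mul, norm_zero, mul_zero]
      exact add_nonneg (mul_nonneg (hκ0 _ _) (mul_nonneg (hf0 _) (hf0 _)))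
        (mul_nonneg (hκ0 _ _) (mul_nonneg (hf0 _) (hf0 _)))
    rcases eq_or_ne (n - k) 0 with hm | hm
    · simp only [hm, hv0, mul_zero, norm_zero]
      exact add_nonneg (mul_nonneg (hκ0 _ _) (mul_nonneg (hf0 _) (hf0 _)))
        (mul_nonneg (hκ0 _ _) (mul_nonneg (hf0 _) (hf0 _)))
    have hcancel : ∀ j : ℤ, j ≠ 0 → |(j : ℝ)| ^ (-s) * |(j : ℝ)| ^ s = 1 := fun j hj => by
      rw [← Real.rpow_add (by positivity)]
      simp
    have hval : |(n : ℝ)| ^ σ * ‖v k * v (n - k)‖ =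
        |(n : ℝ)| ^ σ * |(k : ℝ)| ^ (-s) * |((n - k : ℤ) : ℝ)| ^ (-s) * (f k * f (n - k)) := by
      simp only [f, norm_mul]
      linear_combination -(|(n : ℝ)| ^ σ * ‖v k‖ * ‖v (n - k)‖) * hcancel k hk -
        |(n : ℝ)| ^ σ * ‖v k‖ * ‖v (n - k)‖ * (|(k : ℝ)| ^ (-s) * |(k : ℝ)| ^ s) *
          hcancel (n - k) hm
    rcases le_total |k| |n - k| with h | h
    · refine le_trans (le_of_eq ?_) (le_add_of_nonneg_right
        (mul_nonneg (hκ0 _ _) (mul_nonneg (hf0 _) (hf0 _))))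
      rw [hval]
      simp only [κ, if_pos h, add_sub_cancel]
    · refine le_trans (le_of_eq ?_) (le_add_of_nonneg_left
        (mul_nonneg (hκ0 _ _) (mul_nonneg (hf0 _) (hf0 _))))
      rw [hval]
      simp only [κ, if_pos h, sub_add_cancel]
      ring
  have hconv : ∀ n : ℤ, ENNReal.ofReal (|(n : ℝ)| ^ σ * ‖∑' k : ℤ, v k * v (n - k)‖) ≤
      2 * ∑' k, ENNReal.ofReal (κ k (n - k)) *
        (ENNReal.ofReal (f k) * ENNReal.ofReal (f (n - k))) := by
    intro n
    have hflip : ∑' k, ENNReal.ofReal (κ (n - k) k) *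
        (ENNReal.ofReal (f k) * ENNReal.ofReal (f (n - k))) =
        ∑' k, ENNReal.ofReal (κ k (n - k)) *
          (ENNReal.ofReal (f k) * ENNReal.ofReal (f (n - k))) := by
      rw [← (Equiv.subLeft n).tsum_eq]
      refine tsum_congr fun k => ?_
      simp only [Equiv.subLeft_apply, sub_sub_cancel]
      ring
    calc _ = ENNReal.ofReal (|(n : ℝ)| ^ σ) * ‖∑' k : ℤ, v k * v (n - k)‖ₑ := by
          rw [ENNReal.ofReal_mul (by positivity), ofReal_norm]
      _ ≤ ENNReal.ofReal (|(n : ℝ)| ^ σ) * ∑' k : ℤ, ‖v k * v (n - k)‖ₑ := by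
          gcongr
          exact enorm_tsum_le_tsum_enorm
      _ = ∑' k : ℤ, ENNReal.ofReal (|(n : ℝ)| ^ σ * ‖v k * v (n - k)‖) := by
          rw [← ENNReal.tsum_mul_left]
          exact tsum_congr fun k => by rw [ENNReal.ofReal_mul (by positivity), ofReal_norm]
      _ ≤ ∑' k : ℤ, (ENNReal.ofReal (κ k (n - k)) *
            (ENNReal.ofReal (f k) * ENNReal.ofReal (f (n - k))) + ENNReal.ofReal (κ (n - k) k) *
            (ENNReal.ofReal (f k) * ENNReal.ofReal (f (n - k)))) := by
          gcongr with k
          refine (ENNReal.ofReal_le_ofReal (hterm n k)).trans (le_of_eq ?_)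
          rw [ENNReal.ofReal_add (mul_nonneg (hκ0 _ _) (mul_nonneg (hf0 _) (hf0 _)))
            (mul_nonneg (hκ0 _ _) (mul_nonneg (hf0 _) (hf0 _))), ENNReal.ofReal_mul (hκ0 _ _),
            ENNReal.ofReal_mul (hκ0 _ _), ENNReal.ofReal_mul (hf0 _)]
      _ = _ := by rw [ENNReal.tsum_add, hflip, two_mul]
  have hT : 0 ≤ ∑' n : ℤ, |(n : ℝ)| ^ (2 * s) * ‖v n‖ ^ 2 := tsum_nonneg fun _ => by positivity
  rw [← ENNReal.ofReal_le_ofReal_iff (by positivity),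
    ENNReal.ofReal_sum_of_nonneg fun _ _ => by positivity]
  calc _ ≤ ∑ n ∈ F, (2 * ∑' k, ENNReal.ofReal (κ k (n - k)) *
        (ENNReal.ofReal (f k) * ENNReal.ofReal (f (n - k)))) ^ 2 := by
        refine Finset.sum_le_sum fun n _ => ?_
        rw [hsq _ _ (abs_nonneg _), ← mul_pow, ENNReal.ofReal_pow (by positivity)]
        exact pow_le_pow_left' (hconv n) 2
    _ ≤ ∑' n, (2 * ∑' k, ENNReal.ofReal (κ k (n - k)) *
        (ENNReal.ofReal (f k) * ENNReal.ofReal (f (n - k)))) ^ 2 := ENNReal.sum_le_tsum _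
    _ = 4 * ∑' n, (∑' k, ENNReal.ofReal (κ k (n - k)) *
        (ENNReal.ofReal (f k) * ENNReal.ofReal (f (n - k)))) ^ 2 := by
        simp_rw [mul_pow]
        rw [ENNReal.tsum_mul_left]
        norm_num
    _ ≤ 4 * (ENNReal.ofReal C *
        ENNReal.ofReal (∑' n : ℤ, |(n : ℝ)| ^ (2 * s) * ‖v n‖ ^ 2) ^ 2) := by gcongr
    _ = _ := by
        rw [ENNReal.ofReal_mul (by positivity), ENNReal.ofReal_mul (by norm_num),
          ENNReal.ofReal_pow hT, mul_assoc]
        norm_num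

theorem ksEigen_rpow {L : ℝ} (n : ℤ) (p : ℝ) :
    ksEigen L n ^ p = |2 * Real.pi / L| ^ (2 * p) * |(n : ℝ)| ^ (2 * p) := by
  rw [ksEigen, ← sq_abs, ← Real.rpow_two, ← Real.rpow_mul (abs_nonneg _),
    ← Real.mul_rpow (abs_nonneg _) (abs_nonneg _), ← abs_mul]
  ring_nf

/-- The paper's Lemma in Fourier form: `|A^{-γ}[B(v,v) - a v]| ≤ c (1 + |A^θ v|²)`
for all `v ∈ D(A^θ)`, under the listed conditions on `(γ, θ)`. -/
theorem ks_nonlinearity_growth (L a γ θ : ℝ) (hL : 0 < L) (ha : 0 < a)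
    (hcond : (1 / 4 < γ ∧ γ < 3 / 4 ∧ 3 / 8 - γ / 2 ≤ θ ∧ θ < 3 / 4 - γ) ∨
             (0 ≤ γ ∧ γ ≤ 1 / 4 ∧ 5 / 8 - γ ≤ θ ∧ θ < 3 / 4 - γ) ∨
             (γ < 0 ∧ 1 / 2 - γ ≤ θ ∧ θ < 3 / 4 - γ)) :
    ∃ c : ℝ, ∀ v : ℤ → ℂ, v 0 = 0 →
      Summable (fun n : ℤ => ksEigen L n ^ (2 * θ) * ‖v n‖ ^ 2) →
      Summable (fun n : ℤ => ksEigen L n ^ (-(2 * γ)) * ‖ksB L v n - a * v n‖ ^ 2) ∧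
      Real.sqrt (∑' n : ℤ, ksEigen L n ^ (-(2 * γ)) * ‖ksB L v n - a * v n‖ ^ 2) ≤
        c * (1 + ∑' n : ℤ, ksEigen L n ^ (2 * θ) * ‖v n‖ ^ 2) := by
  obtain ⟨s, hsθ, hγθ, C, hC0, hC⟩ : ∃ s : ℝ, s ≤ 2 * θ ∧ -γ ≤ θ ∧ ∃ C : ℝ, 0 ≤ C ∧
      ∀ v : ℤ → ℂ, v 0 = 0 →
      Summable (fun n : ℤ => |(n : ℝ)| ^ (2 * s) * ‖v n‖ ^ 2) →
      ∀ F : Finset ℤ, ∑ n ∈ F, |(n : ℝ)| ^ (2 * (1 - 2 * γ)) *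
        ‖∑' k : ℤ, v k * v (n - k)‖ ^ 2 ≤
        C * (∑' n : ℤ, |(n : ℝ)| ^ (2 * s) * ‖v n‖ ^ 2) ^ 2 := by
    rcases hcond with ⟨h1, h2, h3, h4⟩ | h | h
    · refine ⟨3 / 4 - γ, by linarith, by linarith, exists_tsum_conv_sq_le ?_⟩
      rw [show 2 * (1 - 2 * γ) = 4 * (3 / 4 - γ) - 1 by ring]
      exact exists_sum_kernel_le_of_lt_half (by linarith) (by linarith)
    · exact ⟨2 * θ, le_rfl, by linarith, exists_tsum_conv_sq_le
        (exists_sum_kernel_le_of_half_lt (by linarith) (by linarith) (by linarith))⟩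
    · exact ⟨2 * θ, le_rfl, by linarith, exists_tsum_conv_sq_le
        (exists_sum_kernel_le_of_half_lt (by linarith) (by linarith) (by linarith))⟩
  set b : ℝ := |2 * Real.pi / L| with hb
  have hb0 : 0 < b := by positivity
  have hmono : ∀ p q : ℝ, p ≤ q → ∀ v : ℤ → ℂ, v 0 = 0 → ∀ n : ℤ,
      |(n : ℝ)| ^ p * ‖v n‖ ^ 2 ≤ |(n : ℝ)| ^ q * ‖v n‖ ^ 2 := by
    intro p q hpq v hv0 n
    rcases eq_or_ne n 0 with rfl | hn
    · simp [hv0]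
    · have : 1 ≤ |(n : ℝ)| := by exact_mod_cast Int.one_le_abs hn
      gcongr
  set D : ℝ := b ^ (2 * (2 * θ)) with hD
  have hD0 : 0 < D := by positivity
  set E : ℝ := b ^ (2 * -(2 * γ))
  have hE0 : 0 < E := by positivity
  set M : ℝ := E * (2 * (b / 2) ^ 2) * C * D⁻¹ ^ 2 + 2 * E * a ^ 2 * D⁻¹ with hM
  have hM0 : 0 ≤ M := by positivity
  refine ⟨√M, fun v hv0 hv => ?_⟩
  set S : ℝ := ∑' n : ℤ, ksEigen L n ^ (2 * θ) * ‖v n‖ ^ 2 with hS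
  have hS0 : 0 ≤ S := tsum_nonneg fun n => by rw [ksEigen_rpow]; positivity
  have hweight : ∀ p : ℝ, p ≤ 2 * (2 * θ) → ∀ n : ℤ,
      |(n : ℝ)| ^ p * ‖v n‖ ^ 2 ≤ D⁻¹ * (ksEigen L n ^ (2 * θ) * ‖v n‖ ^ 2) := by
    intro p hp n
    refine (hmono p _ hp v hv0 n).trans (le_of_eq ?_)
    rw [ksEigen_rpow, ← hb, ← hD, mul_assoc, inv_mul_cancel_left₀ hD0.ne']
  have hvs : Summable fun n : ℤ => |(n : ℝ)| ^ (2 * s) * ‖v n‖ ^ 2 :=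
    Summable.of_nonneg_of_le (fun _ => by positivity) (hweight _ (by linarith)) (hv.mul_left _)
  have hT : ∑' n : ℤ, |(n : ℝ)| ^ (2 * s) * ‖v n‖ ^ 2 ≤ D⁻¹ * S := by
    rw [hS, ← tsum_mul_left]
    exact hvs.tsum_le_tsum (hweight _ (by linarith)) (hv.mul_left _)
  have hT0 : 0 ≤ ∑' n : ℤ, |(n : ℝ)| ^ (2 * s) * ‖v n‖ ^ 2 := tsum_nonneg fun _ => by positivity
  have hterm : ∀ n : ℤ, ksEigen L n ^ (-(2 * γ)) * ‖ksB L v n - a * v n‖ ^ 2 ≤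
      E * (2 * (b / 2) ^ 2) * (|(n : ℝ)| ^ (2 * (1 - 2 * γ)) * ‖∑' k : ℤ, v k * v (n - k)‖ ^ 2) +
      2 * E * a ^ 2 * D⁻¹ * (ksEigen L n ^ (2 * θ) * ‖v n‖ ^ 2) := by
    intro n
    rcases eq_or_ne n 0 with rfl | hn
    · have : ksB L v 0 - a * v 0 = 0 := by simp [ksB, hv0]
      rw [this, hv0, norm_zero]
      simp only [ne_eq, OfNat.ofNat_ne_zero, not_false_eq_true, zero_pow, mul_zero, add_zero]
      positivity
    have hn0 : 0 < |(n : ℝ)| := by positivity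
    have hBnorm : ‖ksB L v n‖ = b / 2 * |(n : ℝ)| * ‖∑' k : ℤ, v k * v (n - k)‖ := by
      rw [ksB, norm_mul, norm_div, norm_mul, norm_mul, Complex.norm_I, Complex.norm_intCast,
        Complex.norm_real, Complex.norm_real, hb, abs_div, abs_mul, Real.norm_eq_abs,
        Real.norm_eq_abs, abs_two]
      ring
    have hsub : ‖ksB L v n - a * v n‖ ^ 2 ≤ 2 * ‖ksB L v n‖ ^ 2 + 2 * (a ^ 2 * ‖v n‖ ^ 2) := by
      have h1 : ‖ksB L v n - a * v n‖ ≤ ‖ksB L v n‖ + a * ‖v n‖ := by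
        refine (norm_sub_le _ _).trans (le_of_eq ?_)
        rw [norm_mul, Complex.norm_real, Real.norm_of_nonneg ha.le]
      calc _ ≤ (‖ksB L v n‖ + a * ‖v n‖) ^ 2 := by gcongr
        _ ≤ _ := by nlinarith [sq_nonneg (‖ksB L v n‖ - a * ‖v n‖)]
    have hpow : |(n : ℝ)| ^ (2 * (1 - 2 * γ)) = |(n : ℝ)| ^ (2 * -(2 * γ)) * |(n : ℝ)| ^ 2 := by
      rw [← Real.rpow_two, ← Real.rpow_add hn0]
      ring_nf
    calc _ ≤ ksEigen L n ^ (-(2 * γ)) * (2 * ‖ksB L v n‖ ^ 2 + 2 * (a ^ 2 * ‖v n‖ ^ 2)) := by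
          refine mul_le_mul_of_nonneg_left hsub ?_
          rw [ksEigen_rpow]
          positivity
      _ = E * (2 * (b / 2) ^ 2) *
            (|(n : ℝ)| ^ (2 * (1 - 2 * γ)) * ‖∑' k : ℤ, v k * v (n - k)‖ ^ 2) +
          2 * E * a ^ 2 * (|(n : ℝ)| ^ (2 * -(2 * γ)) * ‖v n‖ ^ 2) := by
          rw [ksEigen_rpow, hBnorm, hpow]
          ring
      _ ≤ _ := by
          rw [mul_assoc (2 * E * a ^ 2)]
          exact add_le_add_right
            (mul_le_mul_of_nonneg_left (hweight _ (by linarith) n) (by positivity)) _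
  have hnonneg : ∀ n : ℤ, 0 ≤ ksEigen L n ^ (-(2 * γ)) * ‖ksB L v n - a * v n‖ ^ 2 := fun n => by
    rw [ksEigen_rpow]
    positivity
  have hsum : ∀ F : Finset ℤ, ∑ n ∈ F, ksEigen L n ^ (-(2 * γ)) * ‖ksB L v n - a * v n‖ ^ 2 ≤
      M * (1 + S) ^ 2 := by
    intro F
    have hvF : ∑ n ∈ F, ksEigen L n ^ (2 * θ) * ‖v n‖ ^ 2 ≤ S :=
      hv.sum_le_tsum _ fun n _ => by rw [ksEigen_rpow]; positivity
    calc _ ≤ E * (2 * (b / 2) ^ 2) * ∑ n ∈ F, (|(n : ℝ)| ^ (2 * (1 - 2 * γ)) *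
            ‖∑' k : ℤ, v k * v (n - k)‖ ^ 2) +
          2 * E * a ^ 2 * D⁻¹ * ∑ n ∈ F, (ksEigen L n ^ (2 * θ) * ‖v n‖ ^ 2) := by
          rw [Finset.mul_sum, Finset.mul_sum, ← Finset.sum_add_distrib]
          exact Finset.sum_le_sum fun n _ => hterm n
      _ ≤ E * (2 * (b / 2) ^ 2) * (C * (D⁻¹ * S) ^ 2) + 2 * E * a ^ 2 * D⁻¹ * S := by
          gcongr
          exact (hC v hv0 hvs F).trans (by gcongr)
      _ = E * (2 * (b / 2) ^ 2) * C * D⁻¹ ^ 2 * S ^ 2 + 2 * E * a ^ 2 * D⁻¹ * S := by ring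
      _ ≤ E * (2 * (b / 2) ^ 2) * C * D⁻¹ ^ 2 * (1 + S) ^ 2 +
            2 * E * a ^ 2 * D⁻¹ * (1 + S) ^ 2 := by
          gcongr
          · linarith
          · nlinarith
      _ = _ := by rw [hM]; ring
  have hsummable := summable_of_sum_le hnonneg hsum
  refine ⟨hsummable, ?_⟩
  calc _ ≤ √(M * (1 + S) ^ 2) := Real.sqrt_le_sqrt (hsummable.tsum_le_of_sum_le hsum)
    _ = √M * (1 + S) := by rw [Real.sqrt_mul hM0, Real.sqrt_sq (by linarith)]
end

section
/- Let d ∈ {2,3} and θ ≥ 1. There is a constant C (depending on d and θ) such that for all a, b : ℤ^d → ℂ^d with a_0 = b_0 = 0, ∑_{k} |k|^{4θ} |a_k|² < ∞ and ∑_{k} |k|^{4θ} |b_k|² < ∞, the vectors c_n = ∑_{k∈ℤ^d} (a_k · (n−k)) b_{n−k} ∈ ℂ^d (the inner sums converging absolutely) satisfy ∑_{n≠0} |n|^{2(2θ−1)} |c_n|² ≤ C (∑_{k≠0} |k|^{4θ} |a_k|²) (∑_{k≠0} |k|^{4θ} |b_k|²). -/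
/-- Euclidean norm of a lattice point `k ∈ ℤ^d`. -/
noncomputable def latticeNorm {d : ℕ} (k : Fin d → ℤ) : ℝ :=
  Real.sqrt (∑ i, ((k i : ℝ)) ^ 2)

/-- `n`-th Fourier coefficient of the Navier–Stokes nonlinearity `(u·∇)v` (up to the
factor `i`), for vector fields on the `d`-torus with Fourier coefficients `a, b`. -/
noncomputable def nsB {d : ℕ} (a b : (Fin d → ℤ) → EuclideanSpace ℂ (Fin d))
    (n : Fin d → ℤ) : EuclideanSpace ℂ (Fin d) :=
  ∑' k : Fin d → ℤ, (∑ i, a k i * (((n - k) i : ℤ) : ℂ)) • b (n - k)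

theorem latticeNorm_eq_norm {d : ℕ} (k : Fin d → ℤ) :
    latticeNorm k = ‖(WithLp.toLp 2 fun i => (k i : ℝ) : EuclideanSpace ℝ (Fin d))‖ := by
  simp [latticeNorm, EuclideanSpace.norm_eq]

theorem latticeNorm_nonneg {d : ℕ} (k : Fin d → ℤ) : 0 ≤ latticeNorm k :=
  Real.sqrt_nonneg _

theorem latticeNorm_add_le {d : ℕ} (k m : Fin d → ℤ) :
    latticeNorm (k + m) ≤ latticeNorm k + latticeNorm m := by
  simp only [latticeNorm_eq_norm]
  refine le_of_eq_of_le (congrArg norm ?_) (norm_add_le _ _)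
  ext i
  simp

theorem one_le_latticeNorm {d : ℕ} {k : Fin d → ℤ} (hk : k ≠ 0) : 1 ≤ latticeNorm k := by
  obtain ⟨i, hi⟩ := Function.ne_iff.mp hk
  have h_one : (1 : ℝ) ≤ (k i : ℝ) ^ 2 := by
    exact_mod_cast (sq_pos_of_ne_zero hi : 0 < k i ^ 2)
  exact Real.one_le_sqrt.mpr (h_one.trans
    (Finset.single_le_sum (f := fun j => (k j : ℝ) ^ 2) (fun j _ => sq_nonneg _)
      (Finset.mem_univ i)))

theorem summable_latticeNorm_inv_pow {d n : ℕ} (hn : d < n) :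
    Summable fun k : Fin d → ℤ => (latticeNorm k)⁻¹ ^ n := by
  let B := (EuclideanSpace.basisFun (Fin d) ℝ).toBasis
  let L := Submodule.span ℤ (Set.range B)
  have h_rank : Module.finrank ℤ L = d := by
    rw [Module.finrank_eq_card_basis (B.restrictScalars ℤ), Fintype.card_fin]
  have h_sum := ZLattice.summable_norm_pow_inv L n (h_rank.symm ▸ hn)
  have h_comp := h_sum.comp_injective (B.restrictScalars ℤ).equivFun.symm.injective
  refine h_comp.congr fun k => ?_
  have h_coe : (((B.restrictScalars ℤ).equivFun.symm k : L) : EuclideanSpace ℝ (Fin d)) =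
      WithLp.toLp 2 fun i => (k i : ℝ) := by
    rw [Module.Basis.equivFun_symm_apply, Submodule.coe_sum]
    simp_rw [Submodule.coe_smul, Module.Basis.restrictScalars_apply]
    ext j
    simp [B, Pi.single_apply]
  rw [Function.comp_apply, latticeNorm_eq_norm, ← h_coe]
  rfl

/-- Cauchy–Schwarz for infinite sums, with summability of the left-hand side. -/
theorem summable_and_sq_tsum_le_of_sq_le_mul {ι : Type*} {r f g : ι → ℝ}
    (hr : ∀ i, 0 ≤ r i) (hf : ∀ i, 0 ≤ f i) (hg : ∀ i, 0 ≤ g i)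
    (hf_sum : Summable f) (hg_sum : Summable g) (h : ∀ i, r i ^ 2 ≤ f i * g i) :
    Summable r ∧ (∑' i, r i) ^ 2 ≤ (∑' i, f i) * ∑' i, g i := by
  have h_nonneg : 0 ≤ (∑' i, f i) * ∑' i, g i := mul_nonneg (tsum_nonneg hf) (tsum_nonneg hg)
  have h_fin (s : Finset ι) : ∑ i ∈ s, r i ≤ √((∑' i, f i) * ∑' i, g i) := by
    refine Real.le_sqrt_of_sq_le ?_
    refine (Finset.sum_sq_le_sum_mul_sum_of_sq_le_mul s (fun i _ => hf i) (fun i _ => hg i)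
      (fun i _ => h i)).trans ?_
    exact mul_le_mul (hf_sum.sum_le_tsum s fun i _ => hf i) (hg_sum.sum_le_tsum s fun i _ => hg i)
      (Finset.sum_nonneg fun i _ => hg i) (tsum_nonneg hf)
  refine ⟨summable_of_sum_le hr h_fin, ?_⟩
  rw [← Real.le_sqrt (tsum_nonneg hr) h_nonneg]
  exact Real.tsum_le_of_sum_le hr h_fin

/-- The convolution of two nonnegative summable functions is summable, and its sum is the product
of the sums. -/
theorem hasSum_convolution_of_nonneg {G : Type*} [AddCommGroup G] {f g : G → ℝ}
    (hf : ∀ k, 0 ≤ f k) (hg : ∀ k, 0 ≤ g k) (hf_sum : Summable f) (hg_sum : Summable g) :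
    (∀ n, Summable fun k => f k * g (n - k)) ∧
      HasSum (fun n => ∑' k, f k * g (n - k)) ((∑' k, f k) * ∑' k, g k) := by
  let e : G × G ≃ G × G :=
    { toFun := fun p => (p.2, p.1 - p.2)
      invFun := fun p => (p.1 + p.2, p.1)
      left_inv := fun p => by simp
      right_inv := fun p => by simp }
  have h_prod := hf_sum.mul_of_nonneg hg_sum hf hg
  have h_has : HasSum (fun p : G × G => f p.2 * g (p.1 - p.2)) ((∑' k, f k) * ∑' k, g k) := by
    rw [hf_sum.tsum_mul_tsum hg_sum h_prod]
    exact (e.hasSum_iff (f := fun p : G × G => f p.1 * g p.2)).mpr h_prod.hasSum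
  have h_fiber (n : G) : Summable fun k => f k * g (n - k) :=
    h_has.summable.comp_injective (Prod.mk_right_injective n)
  exact ⟨h_fiber, h_has.prod_fiberwise fun n => (h_fiber n).hasSum⟩

theorem norm_sum_mul_intCast_le {d : ℕ} (x : EuclideanSpace ℂ (Fin d)) (m : Fin d → ℤ) :
    ‖∑ i, x i * (m i : ℂ)‖ ≤ ‖x‖ * latticeNorm m := by
  calc ‖∑ i, x i * (m i : ℂ)‖ ≤ ∑ i, ‖x i‖ * |(m i : ℝ)| := by
        refine (norm_sum_le _ _).trans_eq (Finset.sum_congr rfl fun i _ => ?_)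
        rw [norm_mul, Complex.norm_intCast]
    _ ≤ √(∑ i, ‖x i‖ ^ 2) * √(∑ i, |(m i : ℝ)| ^ 2) := Real.sum_mul_le_sqrt_mul_sqrt _ _ _
    _ = ‖x‖ * latticeNorm m := by simp [EuclideanSpace.norm_eq, latticeNorm]

theorem one_le_inv_pow_four_mul_rpow {x θ : ℝ} (hx : 1 ≤ x) (hθ : 1 ≤ θ) :
    1 ≤ x⁻¹ ^ 4 * x ^ (4 * θ) := by
  have hx_pos : 0 < x := by linarith
  rw [inv_pow, ← div_eq_inv_mul, one_le_div (by positivity), ← Real.rpow_natCast]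
  exact Real.rpow_le_rpow_of_exponent_le hx (by push_cast; linarith)

theorem rpow_mul_sq_eq_rpow {y : ℝ} (hy : 0 < y) (θ : ℝ) :
    y ^ (2 * (2 * θ - 1)) * y ^ 2 = y ^ (4 * θ) := by
  rw [← Real.rpow_natCast y 2, ← Real.rpow_add hy]
  congr 1
  push_cast
  ring

theorem sq_le_inv_pow_mul_rpow {x y θ : ℝ} (hx : 1 ≤ x) (hy : 1 ≤ y) (hθ : 1 ≤ θ) :
    y ^ 2 ≤ x⁻¹ ^ 4 * (x ^ (4 * θ) * y ^ (4 * θ)) := by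
  have h_y : y ^ 2 ≤ y ^ (4 * θ) := by
    rw [← Real.rpow_natCast]
    exact Real.rpow_le_rpow_of_exponent_le hy (by push_cast; linarith)
  have h_x := one_le_inv_pow_four_mul_rpow hx hθ
  rw [← mul_assoc]
  exact h_y.trans (le_mul_of_one_le_left (by positivity) h_x)

theorem rpow_mul_sq_le {x y z θ : ℝ} (hx : 1 ≤ x) (hy : 1 ≤ y) (hz : 0 ≤ z) (hzxy : z ≤ x + y)
    (hθ : 1 ≤ θ) :
    z ^ (2 * (2 * θ - 1)) * y ^ 2 ≤
      2 ^ (2 * (2 * θ - 1)) * (x⁻¹ ^ 4 + y⁻¹ ^ 4) * (x ^ (4 * θ) * y ^ (4 * θ)) := by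
  have hx_pos : 0 < x := by linarith
  have hy_pos : 0 < y := by linarith
  have hp : 0 ≤ 2 * (2 * θ - 1) := by linarith
  have h_x := one_le_inv_pow_four_mul_rpow hx hθ
  have h_y := one_le_inv_pow_four_mul_rpow hy hθ
  have h_main (w : ℝ) (hw : 0 < w) (hzw : z ≤ 2 * w) (hyw : y ≤ w)
      (h_le : w ^ (4 * θ) ≤ (x⁻¹ ^ 4 + y⁻¹ ^ 4) * (x ^ (4 * θ) * y ^ (4 * θ))) :
      z ^ (2 * (2 * θ - 1)) * y ^ 2 ≤
        2 ^ (2 * (2 * θ - 1)) * (x⁻¹ ^ 4 + y⁻¹ ^ 4) * (x ^ (4 * θ) * y ^ (4 * θ)) := by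
    calc z ^ (2 * (2 * θ - 1)) * y ^ 2 ≤ (2 * w) ^ (2 * (2 * θ - 1)) * w ^ 2 := by gcongr
      _ = 2 ^ (2 * (2 * θ - 1)) * w ^ (4 * θ) := by
        rw [Real.mul_rpow zero_le_two hw.le, mul_assoc, rpow_mul_sq_eq_rpow hw]
      _ ≤ 2 ^ (2 * (2 * θ - 1)) * ((x⁻¹ ^ 4 + y⁻¹ ^ 4) * (x ^ (4 * θ) * y ^ (4 * θ))) := by gcongr
      _ = _ := by ring
  have hX : 0 ≤ x⁻¹ ^ 4 * (x ^ (4 * θ) * y ^ (4 * θ)) := by positivity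
  have hY : 0 ≤ y⁻¹ ^ 4 * (x ^ (4 * θ) * y ^ (4 * θ)) := by positivity
  rcases le_total x y with hxy | hxy
  · refine h_main y hy_pos (by linarith) le_rfl ?_
    have h := le_mul_of_one_le_left (Real.rpow_nonneg hy_pos.le (4 * θ)) h_x
    linarith
  · refine h_main x hx_pos (by linarith) hxy ?_
    have h := le_mul_of_one_le_left (Real.rpow_nonneg hx_pos.le (4 * θ)) h_y
    linarith

/-- The estimate `|A^{θ-1/2} B(u,v)| ≤ C |A^θ u| |A^θ v|` for the Navier–Stokes
nonlinearity on the `d`-torus (`d = 2, 3`, `θ ≥ 1`), in Fourier form. -/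
theorem nsB_estimate (d : ℕ) (hd : d = 2 ∨ d = 3) (θ : ℝ) (hθ : 1 ≤ θ) :
    ∃ C : ℝ, ∀ a b : (Fin d → ℤ) → EuclideanSpace ℂ (Fin d),
      a 0 = 0 → b 0 = 0 →
      Summable (fun k : Fin d → ℤ => latticeNorm k ^ (4 * θ) * ‖a k‖ ^ 2) →
      Summable (fun k : Fin d → ℤ => latticeNorm k ^ (4 * θ) * ‖b k‖ ^ 2) →
      (∀ n : Fin d → ℤ, Summable (fun k : Fin d → ℤ =>
        ‖(∑ i, a k i * (((n - k) i : ℤ) : ℂ)) • b (n - k)‖)) ∧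
      Summable (fun n : Fin d → ℤ =>
        latticeNorm n ^ (2 * (2 * θ - 1)) * ‖nsB a b n‖ ^ 2) ∧
      ∑' n : Fin d → ℤ, latticeNorm n ^ (2 * (2 * θ - 1)) * ‖nsB a b n‖ ^ 2 ≤
        C * (∑' k : Fin d → ℤ, latticeNorm k ^ (4 * θ) * ‖a k‖ ^ 2) *
          (∑' k : Fin d → ℤ, latticeNorm k ^ (4 * θ) * ‖b k‖ ^ 2) := by
  have hd4 : d < 4 := by omega
  have hg_sum := summable_latticeNorm_inv_pow hd4
  set g : (Fin d → ℤ) → ℝ := fun k => (latticeNorm k)⁻¹ ^ 4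
  set p : ℝ := 2 * (2 * θ - 1)
  have hN (k : Fin d → ℤ) : 0 ≤ latticeNorm k := latticeNorm_nonneg k
  have hg (k : Fin d → ℤ) : 0 ≤ g k := by have := hN k; positivity
  refine ⟨2 ^ p * (2 * ∑' k, g k), fun a b ha hb hF_sum hG_sum => ?_⟩
  set F : (Fin d → ℤ) → ℝ := fun k => latticeNorm k ^ (4 * θ) * ‖a k‖ ^ 2
  set G : (Fin d → ℤ) → ℝ := fun k => latticeNorm k ^ (4 * θ) * ‖b k‖ ^ 2
  have hF (k : Fin d → ℤ) : 0 ≤ F k := mul_nonneg (Real.rpow_nonneg (hN k) _) (sq_nonneg _)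
  have hG (k : Fin d → ℤ) : 0 ≤ G k := mul_nonneg (Real.rpow_nonneg (hN k) _) (sq_nonneg _)
  obtain ⟨h_fiber, h_conv⟩ := hasSum_convolution_of_nonneg hF hG hF_sum hG_sum
  set t : (Fin d → ℤ) → (Fin d → ℤ) → ℝ := fun n k =>
    ‖(∑ i, a k i * (((n - k) i : ℤ) : ℂ)) • b (n - k)‖ with ht_def
  have ht (n k : Fin d → ℤ) : 0 ≤ t n k := norm_nonneg _
  have ht_sq (n k : Fin d → ℤ) :
      t n k ^ 2 ≤ latticeNorm (n - k) ^ 2 * (‖a k‖ ^ 2 * ‖b (n - k)‖ ^ 2) := by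
    rw [show latticeNorm (n - k) ^ 2 * (‖a k‖ ^ 2 * ‖b (n - k)‖ ^ 2) =
      (‖a k‖ * latticeNorm (n - k) * ‖b (n - k)‖) ^ 2 by ring]
    refine pow_le_pow_left₀ (ht n k) ?_ 2
    simp only [ht_def, norm_smul]
    exact mul_le_mul_of_nonneg_right (norm_sum_mul_intCast_le (a k) (n - k)) (norm_nonneg _)
  have ht_zero (n k : Fin d → ℤ) (h : k = 0 ∨ n - k = 0) : t n k = 0 := by
    rcases h with h | h
    · simp [ht_def, h, ha]
    · simp [ht_def, h, hb]
  have ht_le (n k : Fin d → ℤ) : t n k ^ 2 ≤ g k * (F k * G (n - k)) := by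
    by_cases h : k = 0 ∨ n - k = 0
    · rw [ht_zero n k h, zero_pow two_ne_zero]
      exact mul_nonneg (hg k) (mul_nonneg (hF k) (hG _))
    · push Not at h
      have h_scal := sq_le_inv_pow_mul_rpow (one_le_latticeNorm h.1) (one_le_latticeNorm h.2) hθ
      refine (ht_sq n k).trans ((mul_le_mul_of_nonneg_right h_scal (by positivity)).trans_eq ?_)
      simp only [g, F, G]
      ring
  have h_weight (n k : Fin d → ℤ) : latticeNorm n ^ p * t n k ^ 2 ≤
      2 ^ p * (g k + g (n - k)) * (F k * G (n - k)) := by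
    by_cases h : k = 0 ∨ n - k = 0
    · rw [ht_zero n k h, zero_pow two_ne_zero, mul_zero]
      exact mul_nonneg (mul_nonneg (by positivity) (add_nonneg (hg k) (hg _)))
        (mul_nonneg (hF k) (hG _))
    · push Not at h
      have h_tri : latticeNorm n ≤ latticeNorm k + latticeNorm (n - k) := by
        simpa using latticeNorm_add_le k (n - k)
      have h_scal := rpow_mul_sq_le (one_le_latticeNorm h.1) (one_le_latticeNorm h.2) (hN n)
        h_tri hθ
      refine (mul_le_mul_of_nonneg_left (ht_sq n k) (Real.rpow_nonneg (hN n) p)).trans ?_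
      rw [← mul_assoc]
      refine (mul_le_mul_of_nonneg_right h_scal (by positivity)).trans_eq ?_
      simp only [g, F, G]
      ring
  have ht_sum (n : Fin d → ℤ) : Summable (t n) :=
    (summable_and_sq_tsum_le_of_sq_le_mul (ht n) hg (fun k => mul_nonneg (hF k) (hG _))
      hg_sum (h_fiber n) (ht_le n)).1
  have hg_shift (n : Fin d → ℤ) : HasSum (fun k => g (n - k)) (∑' k, g k) :=
    (Equiv.subLeft n).hasSum_iff.mpr hg_sum.hasSum
  have h_bound (n : Fin d → ℤ) : latticeNorm n ^ p * ‖nsB a b n‖ ^ 2 ≤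
      2 ^ p * (2 * ∑' k, g k) * ∑' k, F k * G (n - k) := by
    have h_w := (hg_sum.hasSum.add (hg_shift n)).mul_left ((2 : ℝ) ^ p)
    have h_sqrt : √(latticeNorm n ^ p) ^ 2 = latticeNorm n ^ p :=
      Real.sq_sqrt (Real.rpow_nonneg (hN n) p)
    have h_cs := (summable_and_sq_tsum_le_of_sq_le_mul
      (r := fun k => √(latticeNorm n ^ p) * t n k)
      (fun k => mul_nonneg (Real.sqrt_nonneg _) (ht n k))
      (fun k => mul_nonneg (by positivity) (add_nonneg (hg k) (hg _)))
      (fun k => mul_nonneg (hF k) (hG _)) h_w.summable (h_fiber n)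
      (fun k => by rw [mul_pow, h_sqrt]; exact h_weight n k)).2
    rw [h_w.tsum_eq, tsum_mul_left, mul_pow, h_sqrt, ← two_mul] at h_cs
    refine le_trans ?_ h_cs
    have h_norm : ‖nsB a b n‖ ≤ ∑' k, t n k := norm_tsum_le_tsum_norm (ht_sum n)
    have h_n := Real.rpow_nonneg (hN n) p
    gcongr
  have h_sum : Summable fun n : Fin d → ℤ => latticeNorm n ^ p * ‖nsB a b n‖ ^ 2 :=
    (h_conv.summable.mul_left _).of_nonneg_of_le
      (fun n => mul_nonneg (Real.rpow_nonneg (hN n) p) (sq_nonneg _)) h_bound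
  refine ⟨ht_sum, h_sum, ?_⟩
  rw [mul_assoc _ (∑' k, F k), ← h_conv.tsum_eq, ← tsum_mul_left]
  exact h_sum.tsum_le_tsum h_bound (h_conv.summable.mul_left _)
end
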